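/- Let n ≥ 1, let Ω ⊆ ℝⁿ be open, and let X, Y : Ω → ℝⁿ be smooth. Assume that at every point m ∈ Ω with Y(m) = 0, the derivative DY(m) is invertible and both X and Y are real-analytic on some neighbourhood of m. Then there exists a smooth map g : Ω → Matrix (Fin n) (Fin n) ℝ with g(x) symmetric positive definite for all x ∈ Ω and Y(x) = g(x) · X(x) for all x ∈ Ω, if and only if the following three conditions hold: (i) ⟨X(m), Y(m)⟩ > 0 for every m ∈ Ω with Y(m) ≠ 0; (ii) X(m) = 0 for every m ∈ Ω with Y(m) = 0; (iii) for every m ∈ Ω with Y(m) = 0 there exists a symmetric positive definite matrix ḡ ∈ Matrix (Fin n) (Fin n) ℝ such that DY(m) v = ḡ · (DX(m) v) for all v ∈ ℝⁿ. -/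

import Mathlib

open Topology Matrix
open scoped ContDiff

theorem posDef_eventually {n : ℕ} {g : (Fin n → ℝ) → Matrix (Fin n) (Fin n) ℝ} {m : Fin n → ℝ}
    (hc : ∀ i j, ContinuousAt (fun x => g x i j) m) (hs : ∀ᶠ x in 𝓝 m, (g x).IsHermitian)
    (hm : (g m).PosDef) : ∀ᶠ x in 𝓝 m, (g x).PosDef := by
  have h1 : ∀ᶠ x in 𝓝 m, ∀ v ∈ Metric.sphere (0 : Fin n → ℝ) 1, 0 < v ⬝ᵥ (g x *ᵥ v) := by
    apply (isCompact_sphere (0 : Fin n → ℝ) 1).eventually_forall_of_forall_eventually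
    intro v hv
    have hv0 : v ≠ 0 := by
      rintro rfl
      simp at hv
    have h2 : 0 < v ⬝ᵥ (g m *ᵥ v) := by simpa using hm.dotProduct_mulVec_pos hv0
    have h3 : ContinuousAt (fun z : (Fin n → ℝ) × (Fin n → ℝ) => z.2 ⬝ᵥ (g z.1 *ᵥ z.2)) (m, v) := by
      simp only [dotProduct, mulVec]
      refine tendsto_finsetSum _ fun i _ => ContinuousAt.mul (by fun_prop) ?_
      refine tendsto_finsetSum _ fun j _ => ContinuousAt.mul ?_ (by fun_prop)
      exact (hc i j).comp (f := Prod.fst) (x := (m, v)) continuousAt_fst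
    exact h3.eventually (lt_mem_nhds h2)
  filter_upwards [h1, hs] with x hx hxs
  refine Matrix.posDef_iff_dotProduct_mulVec.2 ⟨hxs, fun v hv => ?_⟩
  have hn : 0 < ‖v‖ := norm_pos_iff.2 hv
  have := hx (‖v‖⁻¹ • v) (by simp [norm_smul, hn.ne'])
  rw [mulVec_smul, smul_dotProduct, dotProduct_smul, smul_eq_mul, smul_eq_mul] at this
  have h4 : 0 < ‖v‖⁻¹ := inv_pos.2 hn
  rw [star_trivial]
  exact (mul_pos_iff_of_pos_left h4).1 ((mul_pos_iff_of_pos_left h4).1 this)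

theorem regular_local {n : ℕ} (X Y : Fin n → ℝ) (h : 0 < ∑ i, X i * Y i) :
    (Matrix.of fun i j => Y i * Y j / (∑ k, X k * Y k) + ((if i = j then (1:ℝ) else 0)
      - X i * X j / ∑ k, X k * X k)).PosDef ∧
    Y = (Matrix.of fun i j => Y i * Y j / (∑ k, X k * Y k) + ((if i = j then (1:ℝ) else 0)
      - X i * X j / ∑ k, X k * X k)).mulVec X := by
  have hX : 0 < ∑ k, X k * X k := by
    have h0 : 0 ≤ ∑ k, X k * X k := Finset.sum_nonneg fun i _ => mul_self_nonneg _
    refine h0.lt_of_ne fun he => ?_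
    have := (Finset.sum_eq_zero_iff_of_nonneg (fun i _ => mul_self_nonneg (X i))).1 he.symm
    simp only [Finset.mem_univ, mul_self_eq_zero, true_imp_iff] at this
    simp [this] at h
  set a := ∑ k, X k * Y k with ha
  set b := ∑ k, X k * X k with hb
  have key : ∀ v : Fin n → ℝ, (Matrix.of fun i j => Y i * Y j / a + ((if i = j then (1:ℝ) else 0)
      - X i * X j / b)).mulVec v = fun i => Y i * (∑ k, Y k * v k) / a + (v i - X i * (∑ k, X k * v k) / b) := by
    intro v
    ext i
    simp only [mulVec, dotProduct, Matrix.of_apply, add_mul, sub_mul, Finset.sum_add_distrib,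
      Finset.sum_sub_distrib, ite_mul, one_mul, zero_mul, Finset.sum_ite_eq, Finset.mem_univ,
      if_true, Finset.mul_sum, Finset.sum_div]
    congr 1
    · exact Finset.sum_congr rfl fun k _ => by ring
    · congr 1
      exact Finset.sum_congr rfl fun k _ => by ring
  constructor
  · refine Matrix.posDef_iff_dotProduct_mulVec.2 ⟨?_, fun v hv => ?_⟩
    · ext i j
      simp [Matrix.conjTranspose_apply, eq_comm (a := i), mul_comm (Y i), mul_comm (X i)]
    · rw [key, star_trivial]
      set s := ∑ k, Y k * v k with hs
      set t := ∑ k, X k * v k with ht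
      have e1 : v ⬝ᵥ (fun i => Y i * s / a + (v i - X i * t / b))
          = s ^ 2 / a + ((∑ k, v k * v k) - t ^ 2 / b) := by
        have : ∀ i, v i * (Y i * s / a + (v i - X i * t / b)) =
          (Y i * v i) * (s / a) + (v i * v i - (X i * v i) * (t / b)) := fun i => by ring
        simp only [dotProduct, this, Finset.sum_add_distrib, Finset.sum_sub_distrib,
          ← Finset.sum_mul, ← hs, ← ht]
        ring
      have e2 : (∑ k, v k * v k) - t ^ 2 / b = ∑ k, (v k - t / b * X k) ^ 2 := by
        have : ∀ k, (v k - t / b * X k) ^ 2 = v k * v k - 2 * (t / b) * (X k * v k)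
          + (t / b) ^ 2 * (X k * X k) := fun k => by ring
        simp only [this, Finset.sum_add_distrib, Finset.sum_sub_distrib,
          ← Finset.mul_sum, ← hb, ← ht]
        field_simp
        ring
      rw [e1, e2]
      have n1 : 0 ≤ s ^ 2 / a := by positivity
      have n2 : 0 ≤ ∑ k, (v k - t / b * X k) ^ 2 := Finset.sum_nonneg fun i _ => sq_nonneg _
      refine (add_nonneg n1 n2).lt_of_ne fun he => hv ?_
      have z1 : s = 0 := by
        have : s ^ 2 / a = 0 := by linarith
        simpa [h.ne'] using this
      have z2 : ∑ k, (v k - t / b * X k) ^ 2 = 0 := by linarith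
      have z3 : ∀ k, v k = t / b * X k := fun k => by
        have := (Finset.sum_eq_zero_iff_of_nonneg (fun i _ => sq_nonneg _)).1 z2 k (Finset.mem_univ k)
        have := pow_eq_zero_iff (two_ne_zero) |>.1 this
        linarith
      have z4 : s = t / b * a := by
        rw [hs, ha, Finset.mul_sum]
        exact Finset.sum_congr rfl fun k _ => by rw [z3 k]; ring
      have z5 : t / b = 0 := by
        rw [z1] at z4
        exact (mul_eq_zero.1 z4.symm).resolve_right h.ne'
      ext k
      rw [z3 k, z5]; simp
  · rw [key]
    ext i
    rw [← hb, show ∑ k, Y k * X k = a from Finset.sum_congr rfl fun k _ => mul_comm _ _]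
    field_simp
    ring
theorem hadamard_analytic {E F : Type*} [NormedAddCommGroup E] [NormedSpace ℝ E]
    [NormedAddCommGroup F] [NormedSpace ℝ F] [CompleteSpace F] {f : E → F} {m : E}
    (hf : AnalyticAt ℝ f m) :
    ∃ P : E → E →L[ℝ] F, AnalyticAt ℝ P m ∧ P m = fderiv ℝ f m ∧
      ∀ᶠ x in 𝓝 m, f x = f m + P x (x - m) := by
  obtain ⟨p, r, hp⟩ := hf
  have h1 : HasFPowerSeriesOnBall p.shift.sum p.shift 0 r :=
    (p.shift.hasFPowerSeriesOnBall (by rw [p.radius_shift]; exact hp.r_pos.trans_le hp.r_le)).mono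
      hp.r_pos (by rw [p.radius_shift]; exact hp.r_le)
  have h2 : HasFPowerSeriesOnBall (fun x => p.shift.sum (x - m)) p.shift m r := by
    simpa using h1.comp_sub m
  have h3 := h2.unshift (z := f m)
  have h4 : p.shift.unshift (f m) = p := by
    ext n v
    cases n with
    | zero =>
      simp [FormalMultilinearSeries.unshift, ← hp.coeff_zero v]
    | succ n =>
      simp [FormalMultilinearSeries.unshift, FormalMultilinearSeries.shift]
  rw [h4] at h3
  have h5 : ∀ᶠ x in 𝓝 m, f x = f m + p.shift.sum (x - m) (x - m) := by
    filter_upwards [Metric.eball_mem_nhds m hp.r_pos] with x hx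
    exact hp.unique h3 hx
  refine ⟨_, h2.analyticAt, ?_, h5⟩
  have h6 := h2.analyticAt.differentiableAt.hasFDerivAt
  have h7 := (h6.clm_apply ((hasFDerivAt_id m).sub_const m)).const_add (f m)
  have h8 := h7.congr_of_eventuallyEq h5
  rw [h8.fderiv]
  ext v
  simp

noncomputable def symPart {n : ℕ} (B : (Fin n → ℝ) →L[ℝ] (Fin n → ℝ) →L[ℝ] (Fin n → ℝ))
    (X : Fin n → ℝ) (i j : Fin n) : ℝ :=
  (1 / 2) * (B (Pi.single j 1) X i + B (Pi.single i 1) X j + B X (Pi.single j 1) i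
    + B X (Pi.single i 1) j
    - ∑ k, X k * (B (Pi.single i 1) (Pi.single j 1) k + B (Pi.single j 1) (Pi.single i 1) k))

theorem symPart_comm {n : ℕ} (B : (Fin n → ℝ) →L[ℝ] (Fin n → ℝ) →L[ℝ] (Fin n → ℝ))
    (X : Fin n → ℝ) (i j : Fin n) : symPart B X j i = symPart B X i j := by
  unfold symPart
  simp only [add_comm (B (Pi.single i 1) (Pi.single j 1) _)]
  ring

theorem symPart_zero {n : ℕ} (B : (Fin n → ℝ) →L[ℝ] (Fin n → ℝ) →L[ℝ] (Fin n → ℝ))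
    (i j : Fin n) : symPart B 0 i j = 0 := by
  simp [symPart]

theorem symPart_mulVec {n : ℕ} (B : (Fin n → ℝ) →L[ℝ] (Fin n → ℝ) →L[ℝ] (Fin n → ℝ))
    (X : Fin n → ℝ) : (Matrix.of (symPart B X)).mulVec X = B X X := by
  have lin : ∀ (T : (Fin n → ℝ) →L[ℝ] (Fin n → ℝ)) (i : Fin n),
      ∑ j, T (Pi.single j 1) i * X j = T X i := by
    intro T i
    conv_rhs => rw [← Finset.univ_sum_single X]
    rw [map_sum, Finset.sum_apply]
    refine Finset.sum_congr rfl fun j _ => ?_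
    have : (Pi.single j (X j) : Fin n → ℝ) = X j • Pi.single j (1 : ℝ) := by
      rw [← Pi.single_smul]; simp
    rw [this, map_smul]; simp [mul_comm]
  ext i
  have h1 : ∑ j, B (Pi.single j 1) X i * X j = B X X i := by
    simpa using lin (B.flip X) i
  have h2 : ∑ j, B X (Pi.single j 1) i * X j = B X X i := lin (B X) i
  have h3 : ∑ j, (∑ k, X k * B (Pi.single i 1) (Pi.single j 1) k) * X j
      = ∑ k, B (Pi.single i 1) X k * X k := by
    simp only [← lin (B (Pi.single i 1)), Finset.sum_mul]
    rw [Finset.sum_comm]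
    exact Finset.sum_congr rfl fun _ _ => Finset.sum_congr rfl fun _ _ => by ring
  have h4 : ∑ j, (∑ k, X k * B (Pi.single j 1) (Pi.single i 1) k) * X j
      = ∑ k, B X (Pi.single i 1) k * X k := by
    have := lin (B.flip (Pi.single i 1))
    simp only [ContinuousLinearMap.flip_apply] at this
    simp only [← this, Finset.sum_mul]
    rw [Finset.sum_comm]
    exact Finset.sum_congr rfl fun _ _ => Finset.sum_congr rfl fun _ _ => by ring
  simp only [mulVec, dotProduct, Matrix.of_apply, symPart, mul_add, Finset.sum_add_distrib, add_mul,
    mul_sub, sub_mul, Finset.sum_sub_distrib, mul_assoc, ← Finset.mul_sum, h1, h2, h3, h4]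
  ring

theorem singular_local {n : ℕ} {X Y : (Fin n → ℝ) → (Fin n → ℝ)} {m : Fin n → ℝ}
    (hX : AnalyticAt ℝ X m) (hY : AnalyticAt ℝ Y m) (hXm : X m = 0) (hYm : Y m = 0)
    (hbij : Function.Bijective (fderiv ℝ Y m)) {G : Matrix (Fin n) (Fin n) ℝ} (hG : G.PosDef)
    (hD : ∀ v, fderiv ℝ Y m v = G.mulVec (fderiv ℝ X m v)) :
    ∃ g : (Fin n → ℝ) → Fin n → Fin n → ℝ, ∀ᶠ x in 𝓝 m, ContDiffAt ℝ ∞ g x ∧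
      (Matrix.of (g x)).PosDef ∧ Y x = (Matrix.of (g x)).mulVec (X x) := by
  obtain ⟨P, hP, hPm, hPX⟩ := hadamard_analytic hX
  let T : (Fin n → ℝ) →L[ℝ] (Fin n → ℝ) := (Matrix.mulVecLin G).toContinuousLinearMap
  have hT : ∀ v, T v = G.mulVec v := fun v => rfl
  have hR : AnalyticAt ℝ (fun x => Y x - T (X x)) m :=
    hY.sub ((T.analyticAt _).comp hX)
  have hR' : fderiv ℝ (fun x => Y x - T (X x)) m = 0 := by
    have := hY.differentiableAt.hasFDerivAt.sub
      (T.hasFDerivAt.comp m hX.differentiableAt.hasFDerivAt)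
    refine (HasFDerivAt.fderiv this).trans ?_
    ext1 v
    simp [hD, hT]
  obtain ⟨Q, hQ, hQm, hQR⟩ := hadamard_analytic hR
  obtain ⟨C, hC, -, hCQ⟩ := hadamard_analytic hQ
  rw [hQm, hR'] at hCQ
  have hinj : Function.Injective (P m) := by
    rw [hPm, injective_iff_map_eq_zero]
    intro v hv
    apply hbij.1
    rw [hD v, hv]; simp
  let e : (Fin n → ℝ) ≃L[ℝ] (Fin n → ℝ) :=
    (LinearEquiv.ofInjectiveEndo (P m : (Fin n → ℝ) →ₗ[ℝ] (Fin n → ℝ)) hinj).toContinuousLinearEquiv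
  have he : (e : (Fin n → ℝ) →L[ℝ] (Fin n → ℝ)) = P m := by ext1 v; rfl
  have hI : ContDiffAt ℝ ω (fun x => (P x).inverse) m := by
    have h1 := contDiffAt_map_inverse (𝕜 := ℝ) (n := ω) e
    rw [he] at h1
    exact h1.comp m hP.contDiffAt
  have hinv : ∀ᶠ x in 𝓝 m, ∀ w, (P x).inverse (P x w) = w := by
    have h1 := e.nhds
    rw [he] at h1
    filter_upwards [hP.continuousAt h1] with x hx w
    obtain ⟨e', he'⟩ := hx
    rw [← he']; simp
  let B : (Fin n → ℝ) → (Fin n → ℝ) →L[ℝ] (Fin n → ℝ) →L[ℝ] (Fin n → ℝ) := fun x =>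
    (C x).bilinearComp (P x).inverse (P x).inverse
  have hB : ∀ᶠ x in 𝓝 m, Y x = G.mulVec (X x) + B x (X x) (X x) := by
    filter_upwards [hPX, hQR, hCQ, hinv] with x h1 h2 h3 h4
    rw [hXm, zero_add] at h1
    have h5 : (P x).inverse (X x) = x - m := by rw [h1, h4]
    rw [h3, hXm, hYm, hT] at h2
    have : B x (X x) (X x) = C x (x - m) (x - m) := by
      simp [B, h5]
    rw [this, ← sub_eq_iff_eq_add', h2]
    simp
  let g : (Fin n → ℝ) → Fin n → Fin n → ℝ := fun x i j => G i j + symPart (B x) (X x) i j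
  have hof : ∀ x, Matrix.of (g x) = G + Matrix.of (symPart (B x) (X x)) := fun x => rfl
  have hg : ContDiffAt ℝ ω g m := by
    have hX' : ContDiffAt ℝ ω X m := hX.contDiffAt
    have hC' : ContDiffAt ℝ ω C m := hC.contDiffAt
    have hXk : ∀ k, ContDiffAt ℝ ω (fun x => X x k) m := contDiffAt_pi.1 hX'
    have hb : ∀ u w : (Fin n → ℝ) → (Fin n → ℝ), ContDiffAt ℝ ω u m → ContDiffAt ℝ ω w m →
        ∀ i, ContDiffAt ℝ ω (fun x => B x (u x) (w x) i) m := by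
      intro u w hu hw
      refine contDiffAt_pi.1 ?_
      simp only [B, ContinuousLinearMap.bilinearComp_apply]
      exact (hC'.clm_apply (hI.clm_apply hu)).clm_apply (hI.clm_apply hw)
    refine contDiffAt_pi.2 fun i => contDiffAt_pi.2 fun j => ?_
    have hc : ∀ i : Fin n, ContDiffAt ℝ ω (fun _ : Fin n → ℝ => (Pi.single i 1 : Fin n → ℝ)) m :=
      fun i => contDiffAt_const
    refine contDiffAt_const.add (contDiffAt_const.mul (ContDiffAt.sub
      ((((hb _ _ (hc j) hX' i).add (hb _ _ (hc i) hX' j)).add (hb _ _ hX' (hc j) i)).add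
        (hb _ _ hX' (hc i) j)) ?_))
    exact ContDiffAt.sum fun k _ => (hXk k).mul
      ((hb _ _ (hc i) (hc j) k).add (hb _ _ (hc j) (hc i) k))
  have hherm : ∀ x, (Matrix.of (g x)).IsHermitian := by
    intro x
    rw [hof]
    refine hG.1.add ?_
    ext i j
    simp [Matrix.conjTranspose_apply, symPart_comm]
  have hgm : (Matrix.of (g m)).PosDef := by
    have : Matrix.of (g m) = G := by
      ext i j
      simp [g, hXm, symPart_zero]
    rwa [this]
  have hpd : ∀ᶠ x in 𝓝 m, (Matrix.of (g x)).PosDef := by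
    refine posDef_eventually (g := fun x => Matrix.of (g x)) ?_ (Filter.Eventually.of_forall hherm) hgm
    intro i j
    exact continuousAt_pi.1 (continuousAt_pi.1 hg.continuousAt i) j
  refine ⟨g, ?_⟩
  filter_upwards [hg.eventually (by simp), hpd, hB] with x h1 h2 h3
  refine ⟨h1.of_le (by simp), h2, ?_⟩
  rw [hof, Matrix.add_mulVec, symPart_mulVec, h3]

theorem patch {n : ℕ} {Ω : Set (Fin n → ℝ)} (hΩ : IsOpen Ω)
    (t : (Fin n → ℝ) → Set (Fin n → Fin n → ℝ)) (ht : ∀ x ∈ Ω, Convex ℝ (t x))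
    (hloc : ∀ x ∈ Ω, ∃ g : (Fin n → ℝ) → Fin n → Fin n → ℝ, ∀ᶠ y in 𝓝 x,
      ContDiffAt ℝ ∞ g y ∧ g y ∈ t y) :
    ∃ g : (Fin n → ℝ) → Fin n → Fin n → ℝ, ContDiffOn ℝ ∞ g Ω ∧ ∀ x ∈ Ω, g x ∈ t x := by
  classical
  let U : TopologicalSpace.Opens (Fin n → ℝ) := ⟨Ω, hΩ⟩
  have : LocallyCompactSpace U := hΩ.locallyCompactSpace
  have : SigmaCompactSpace U := inferInstance
  obtain ⟨g, hg⟩ := exists_contMDiffMap_forall_mem_convex_of_local (M := U) (n := ⊤)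
    (modelWithCornersSelf ℝ (Fin n → ℝ)) (t := fun x : U => t x) (fun x => ht x x.2) (by
      intro x
      obtain ⟨g, hg⟩ := hloc x x.2
      refine ⟨_, continuous_subtype_val.continuousAt hg, fun y => g y, ?_, fun y hy => hy.2⟩
      intro y hy
      exact (contMDiffAt_subtype_iff.2 hy.1.contMDiffAt).contMDiffWithinAt)
  let f : (Fin n → ℝ) → Fin n → Fin n → ℝ := fun x => if h : x ∈ Ω then g ⟨x, h⟩ else 0
  have hf : ∀ x : U, f x = g x := fun x => dif_pos x.2
  refine ⟨f, ?_, fun x hx => ?_⟩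
  · intro x hx
    have h1 := g.contMDiff ⟨x, hx⟩
    have h2 : (g : U → Fin n → Fin n → ℝ) = fun x : U => f x := funext fun x => (hf x).symm
    rw [h2, contMDiffAt_subtype_iff] at h1
    exact h1.contDiffAt.contDiffWithinAt
  · have := hg ⟨x, hx⟩
    rwa [← hf] at this

/-- **Main theorem (coordinate version).**
Let `n ≥ 1`, `Ω ⊆ ℝⁿ` open, and `X Y : Ω → ℝⁿ` smooth. Assume that at every `m ∈ Ω` with
`Y m = 0` the derivative `DY m` is invertible and `X`, `Y` are real analytic on a
neighbourhood of `m`. Then a smooth field of symmetric positive definite matrices `g`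
with `Y x = g x · X x` on `Ω` exists iff
(i) `⟨X m, Y m⟩ > 0` whenever `Y m ≠ 0`,
(ii) `X m = 0` whenever `Y m = 0`, and
(iii) at each zero `m` of `Y` there is a symmetric positive definite `ḡ` with
`DY m v = ḡ · (DX m v)` for all `v`. -/
theorem main_characterisation
    (n : ℕ) (hn : 1 ≤ n) (Ω : Set (Fin n → ℝ)) (hΩ : IsOpen Ω)
    (X Y : (Fin n → ℝ) → (Fin n → ℝ))
    (hX : ContDiffOn ℝ (⊤ : ℕ∞) X Ω) (hY : ContDiffOn ℝ (⊤ : ℕ∞) Y Ω)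
    (hcrit : ∀ m ∈ Ω, Y m = 0 →
      Function.Bijective (fderiv ℝ Y m) ∧
      ∃ V : Set (Fin n → ℝ), IsOpen V ∧ m ∈ V ∧ AnalyticOnNhd ℝ X V ∧ AnalyticOnNhd ℝ Y V) :
    (∃ g : (Fin n → ℝ) → Matrix (Fin n) (Fin n) ℝ,
      (∀ i j, ContDiffOn ℝ (⊤ : ℕ∞) (fun x => g x i j) Ω) ∧
      (∀ x ∈ Ω, (g x).PosDef) ∧
      (∀ x ∈ Ω, Y x = (g x).mulVec (X x)))
    ↔
    ((∀ m ∈ Ω, Y m ≠ 0 → 0 < ∑ i, X m i * Y m i) ∧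
     (∀ m ∈ Ω, Y m = 0 → X m = 0) ∧
     (∀ m ∈ Ω, Y m = 0 → ∃ gbar : Matrix (Fin n) (Fin n) ℝ, gbar.PosDef ∧
        ∀ v : Fin n → ℝ, fderiv ℝ Y m v = gbar.mulVec (fderiv ℝ X m v))) := by
  constructor
  · rintro ⟨g, hgs, hgp, hgY⟩
    have hz : ∀ m ∈ Ω, Y m = 0 → X m = 0 := by
      intro m hm h0
      by_contra hne
      have := (hgp m hm).dotProduct_mulVec_pos hne
      rw [← hgY m hm, h0] at this
      simp at this
    refine ⟨fun m hm hne => ?_, hz, fun m hm h0 => ⟨g m, hgp m hm, fun v => ?_⟩⟩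
    · have hX0 : X m ≠ 0 := by
        intro h
        apply hne
        rw [hgY m hm, h]; simp
      have := (hgp m hm).dotProduct_mulVec_pos hX0
      rw [← hgY m hm, star_trivial] at this
      exact this
    · have hXm := hz m hm h0
      have hnh : Ω ∈ 𝓝 m := hΩ.mem_nhds hm
      have hXd : DifferentiableAt ℝ X m := (hX.contDiffAt hnh).differentiableAt (by simp)
      have hXd' := hasFDerivAt_pi'.1 hXd.hasFDerivAt
      have hgd : ∀ i j, DifferentiableAt ℝ (fun x => g x i j) m := fun i j =>
        ((hgs i j).contDiffAt hnh).differentiableAt (by simp)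
      have hev : Y =ᶠ[𝓝 m] fun x => (g x).mulVec (X x) := by
        filter_upwards [hnh] with x hx using hgY x hx
      rw [hev.fderiv_eq]
      have hd : HasFDerivAt (fun x => (g x).mulVec (X x))
          ((Matrix.mulVecLin (g m)).toContinuousLinearMap.comp (fderiv ℝ X m)) m := by
        refine hasFDerivAt_pi'.2 fun i => ?_
        have h := HasFDerivAt.fun_sum (u := Finset.univ)
          fun j _ => (hgd i j).hasFDerivAt.mul (hXd' j)
        refine h.congr_fderiv ?_
        ext v
        simp [hXm, Matrix.mulVec, dotProduct]
      rw [hd.fderiv]; rfl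
  · rintro ⟨h1, h2, h3⟩
    obtain ⟨g, hg, hgt⟩ := patch hΩ
      (fun x => {A | (Matrix.of A).PosDef ∧ Y x = (Matrix.of A).mulVec (X x)}) (by
        rintro x - A ⟨hA, hA'⟩ B ⟨hB, hB'⟩ a b ha hb hab
        have e : Matrix.of (a • A + b • B) = a • Matrix.of A + b • Matrix.of B := rfl
        refine ⟨?_, ?_⟩
        · rw [e]
          rcases ha.eq_or_lt with rfl | ha
          · rw [zero_add] at hab
            simpa [hab] using hB
          · exact (hA.smul ha).add_posSemidef (hB.posSemidef.smul hb)
        · rw [e, Matrix.add_mulVec, Matrix.smul_mulVec, Matrix.smul_mulVec, ← hA', ← hB', ← add_smul,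
            hab, one_smul]) (by
        intro m hm
        by_cases h0 : Y m = 0
        · obtain ⟨hb, V, -, hmV, hXV, hYV⟩ := hcrit m hm h0
          obtain ⟨G, hG, hD⟩ := h3 m hm h0
          exact singular_local (hXV m hmV) (hYV m hmV) (h2 m hm h0) h0 hb hG hD
        · have hpos := h1 m hm h0
          refine ⟨fun x i j => Y x i * Y x j / (∑ k, X x k * Y x k) + ((if i = j then (1:ℝ) else 0)
            - X x i * X x j / ∑ k, X x k * X x k), ?_⟩
          have hYe : ∀ᶠ x in 𝓝 m, Y x ≠ 0 :=
            (hY.continuousOn.continuousAt (hΩ.mem_nhds hm)).eventually_ne h0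
          filter_upwards [hYe, hΩ.mem_nhds hm] with x hx hxΩ
          have hp := h1 x hxΩ hx
          refine ⟨?_, regular_local (X x) (Y x) hp⟩
          have hXi := contDiffAt_pi.1 (hX.contDiffAt (hΩ.mem_nhds hxΩ))
          have hYi := contDiffAt_pi.1 (hY.contDiffAt (hΩ.mem_nhds hxΩ))
          have hXX : ∑ k, X x k * X x k ≠ 0 := by
            intro h
            have := (Finset.sum_eq_zero_iff_of_nonneg (fun i _ => mul_self_nonneg (X x i))).1 h
            simp only [Finset.mem_univ, mul_self_eq_zero, true_imp_iff] at this
            simp [this] at hp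
          refine contDiffAt_pi.2 fun i => contDiffAt_pi.2 fun j => ?_
          exact (((hYi i).mul (hYi j)).div (ContDiffAt.sum fun k _ => (hXi k).mul (hYi k))
            hp.ne').add (contDiffAt_const.sub (((hXi i).mul (hXi j)).div
              (ContDiffAt.sum fun k _ => (hXi k).mul (hXi k)) hXX)))
    exact ⟨fun x => Matrix.of (g x), fun i j => contDiffOn_pi.1 (contDiffOn_pi.1 hg i) j,
      fun x hx => (hgt x hx).1, fun x hx => (hgt x hx).2⟩
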